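/- arXiv:2105.14084 — 2 statements merged into one kernel-verified Lean document; each statement's English description precedes it below -/
import Mathlib

section
/- Let A ∈ ℝ^{n×d} with A Aᵀ invertible, rows A_1,…,A_n ∈ ℝ^d, and fix i ∈ [n]. Let T = {Σ_j a_j A_j : Σ_j a_j = 1} and T_{∖i} = {Σ_{j≠i} a_j A_j : Σ_{j≠i} a_j = 1}, and let Π_T(0) and Π_{T∖i}(0) denote the unique minimum-Euclidean-norm points of T and T_{∖i}, respectively, and Π_{T∖i}(A_i) the Euclidean projection of A_i onto T_{∖i}. Write Π_T(0) = Σ_{j=1}^n a*_j A_j with Σ_j a*_j = 1 (the coefficients a* are unique since A Aᵀ is invertible). Then a*_i = (‖Π_{T∖i}(0)‖₂² − A_iᵀ Π_{T∖i}(0)) / ‖A_i − Π_{T∖i}(A_i)‖₂²; in particular a*_i > 0 if and only if A_iᵀ Π_{T∖i}(0) < ‖Π_{T∖i}(0)‖₂². -/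
open Matrix

noncomputable section

/-- Euclidean norm of a finite real vector. -/
def enorm2 {k : ℕ} (w : Fin k → ℝ) : ℝ := Real.sqrt (∑ j, (w j) ^ 2)

/-!
Put `S = T_{∖i}`, `p = Π_S(0)`, `q = Π_S(A_i)`, and let `x = ∑ a_j A_j` be the minimum-norm point
of `T`. Replacing `A_i` by `q` in this combination gives `x = s + a_i (A_i - q)` with `s ∈ S`.
Since `x` is orthogonal to the direction of `T`, and `p` and `A_i - q` are orthogonal to the
direction of `S`,
`0 = ⟪x, A_i - q⟫ = ⟪s, A_i - q⟫ + a_i ‖A_i - q‖² = ⟪A_i, p⟫ - ‖p‖² + a_i ‖A_i - q‖²`.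
-/

open scoped RealInnerProductSpace

section AffineCombination

variable {k V ι : Type*} [Ring k] [AddCommGroup V] [Module k V]

theorem mem_affineSpan_image_iff_exists_sum_smul [Nontrivial k] [Fintype ι] {v : ι → V}
    {s : Set ι} {x : V} :
    x ∈ affineSpan k (v '' s) ↔
      ∃ w : ι → k, (∀ j ∉ s, w j = 0) ∧ ∑ j, w j = 1 ∧ x = ∑ j, w j • v j := by
  constructor
  · intro hx
    obtain ⟨t, w, hts, hw, rfl⟩ := eq_affineCombination_of_mem_affineSpan_image hx
    have hsum : ∑ j, (t : Set ι).indicator w j = 1 := by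
      rw [Finset.sum_indicator_subset w t.subset_univ, hw]
    refine ⟨(t : Set ι).indicator w,
      fun j hj ↦ Set.indicator_of_notMem (fun hjt ↦ hj (hts hjt)) w, hsum, ?_⟩
    rw [Finset.affineCombination_indicator_subset w v t.subset_univ,
      Finset.affineCombination_eq_linear_combination _ _ _ hsum]
  · rintro ⟨w, hws, hw, rfl⟩
    rw [← Finset.affineCombination_eq_linear_combination _ _ _ hw]
    exact affineCombination_mem_affineSpan_image hw (fun j _ ↦ hws j) v

theorem sum_smul_mem_affineSpan_range [Nontrivial k] (v : ι → V) {t : Finset ι} {a : ι → k}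
    (ha : ∑ j ∈ t, a j = 1) : ∑ j ∈ t, a j • v j ∈ affineSpan k (Set.range v) := by
  rw [← Finset.affineCombination_eq_linear_combination _ _ _ ha]
  exact affineCombination_mem_affineSpan ha v

theorem sum_smul_sub_smul_sub_mem_affineSpan [Nontrivial k] {v : ι → V} {i : ι} {t : Finset ι}
    (hi : i ∈ t) {a : ι → k} (ha : ∑ j ∈ t, a j = 1) {q : V}
    (hq : q ∈ affineSpan k (v '' {i}ᶜ)) :
    ∑ j ∈ t, a j • v j - a i • (v i - q) ∈ affineSpan k (v '' {i}ᶜ) := by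
  classical
  have hrange : Set.range (Function.update v i q) ⊆ affineSpan k (v '' {i}ᶜ) := by
    rintro _ ⟨j, rfl⟩
    obtain rfl | hj := eq_or_ne j i
    · rwa [Function.update_self]
    · rw [Function.update_of_ne hj]
      exact mem_affineSpan k (Set.mem_image_of_mem v hj)
  have hsum : ∑ j ∈ t, a j • Function.update v i q j = ∑ j ∈ t, a j • v j - a i • (v i - q) := by
    have hrest : ∑ j ∈ t.erase i, a j • Function.update v i q j = ∑ j ∈ t.erase i, a j • v j :=
      Finset.sum_congr rfl fun j hj ↦ by rw [Function.update_of_ne (Finset.ne_of_mem_erase hj)]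
    rw [← Finset.add_sum_erase t _ hi, ← Finset.add_sum_erase t (fun j ↦ a j • v j) hi, hrest,
      Function.update_self, smul_sub]
    abel
  rw [← hsum]
  exact affineSpan_le.2 hrange (sum_smul_mem_affineSpan_range _ ha)

end AffineCombination

section NearestPoint

variable {E : Type*} [NormedAddCommGroup E] [InnerProductSpace ℝ E] {S : AffineSubspace ℝ E}

theorem inner_sub_sub_eq_zero_of_isMinOn {x p y : E} (hp : p ∈ S)
    (hmin : IsMinOn (fun z ↦ ‖x - z‖) S p) (hy : y ∈ S) : ⟪x - p, y - p⟫ = 0 := by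
  have hle : ∀ z ∈ S, ⟪x - p, z - p⟫ ≤ 0 :=
    (norm_eq_iInf_iff_real_inner_le_zero S.convex hp).1 (hmin.iInf_eq hp).symm
  have hreflect : p - (y - p) ∈ S := by
    simpa [sub_eq_add_neg, add_comm] using S.smul_vsub_vadd_mem (-1) hy hp hp
  refine le_antisymm (hle y hy) (neg_nonpos.1 ?_)
  rw [← inner_neg_right, ← sub_sub_cancel_left p (y - p)]
  exact hle _ hreflect

theorem inner_sub_eq_zero_of_isMinOn_norm {p y z : E} (hp : p ∈ S) (hmin : IsMinOn norm S p)
    (hy : y ∈ S) (hz : z ∈ S) : ⟪p, y - z⟫ = 0 := by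
  have hperp : ∀ w ∈ S, ⟪p, w - p⟫ = 0 := fun w hw ↦ by
    simpa using inner_sub_sub_eq_zero_of_isMinOn (x := 0) hp (by simpa using hmin) hw
  rw [← sub_sub_sub_cancel_right y z p, inner_sub_right, hperp y hy, hperp z hz, sub_zero]

theorem mul_norm_sub_sq_of_inner_add_smul_sub_eq_zero {v p q s : E} {c : ℝ}
    (hp : p ∈ S) (hpmin : IsMinOn norm S p) (hq : q ∈ S) (hqmin : IsMinOn (fun y ↦ ‖v - y‖) S q)
    (hs : s ∈ S) (horth : ⟪s + c • (v - q), v - q⟫ = 0) :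
    c * ‖v - q‖ ^ 2 = ‖p‖ ^ 2 - ⟪v, p⟫ := by
  have hqperp : ∀ y ∈ S, ⟪v - q, y - q⟫ = 0 :=
    fun y hy ↦ inner_sub_sub_eq_zero_of_isMinOn hq hqmin hy
  have hsp : ⟪s, v - q⟫ = ⟪p, v - q⟫ := by
    rw [← sub_eq_zero, ← inner_sub_left, real_inner_comm, ← sub_sub_sub_cancel_right s p q,
      inner_sub_right, hqperp s hs, hqperp p hp, sub_zero]
  have hpq : ⟪p, q⟫ = ‖p‖ ^ 2 := by
    rw [← real_inner_self_eq_norm_sq, ← sub_eq_zero, ← inner_sub_right]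
    exact inner_sub_eq_zero_of_isMinOn_norm hp hpmin hq hp
  rw [inner_add_left, real_inner_smul_left, real_inner_self_eq_norm_sq, hsp, inner_sub_right, hpq,
    real_inner_comm] at horth
  linarith

end NearestPoint

section Matrix

theorem linearIndependent_row_of_isUnit_mul {m n R : Type*} [Fintype m] [DecidableEq m]
    [Fintype n] [Semiring R] {A : Matrix m n R} {B : Matrix n m R} (h : IsUnit (A * B)) :
    LinearIndependent R A.row := by
  rw [← vecMul_injective_iff]
  refine Function.Injective.of_comp (f := (· ᵥ* B)) ?_
  simpa only [Function.comp_def, vecMul_vecMul] using vecMul_injective_of_isUnit h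

variable {m n : Type*} [Fintype m]

theorem toLp_transpose_mulVec (A : Matrix m n ℝ) (a : m → ℝ) :
    WithLp.toLp 2 (Aᵀ *ᵥ a) = ∑ j, a j • WithLp.toLp 2 (A j) := by
  ext l
  simp [mulVec, dotProduct, mul_comm]

theorem toLp_mem_affineSpan_image_row_iff {A : Matrix m n ℝ} {s : Set m} {x : n → ℝ} :
    WithLp.toLp 2 x ∈ affineSpan ℝ ((fun j ↦ WithLp.toLp 2 (A j)) '' s) ↔
      ∃ a : m → ℝ, (∀ j ∉ s, a j = 0) ∧ ∑ j, a j = 1 ∧ x = Aᵀ *ᵥ a := by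
  simp only [mem_affineSpan_image_iff_exists_sum_smul, ← toLp_transpose_mulVec,
    (WithLp.toLp_injective 2).eq_iff]

theorem setOf_transpose_mulVec_eq_preimage (A : Matrix m n ℝ) :
    {x | ∃ a : m → ℝ, ∑ j, a j = 1 ∧ x = Aᵀ *ᵥ a} =
      WithLp.toLp 2 ⁻¹' affineSpan ℝ (Set.range fun j ↦ WithLp.toLp 2 (A j)) := by
  ext x
  simp [← Set.image_univ, toLp_mem_affineSpan_image_row_iff]

theorem setOf_transpose_mulVec_eq_preimage_compl (A : Matrix m n ℝ) (i : m) :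
    {x | ∃ a : m → ℝ, a i = 0 ∧ ∑ j, a j = 1 ∧ x = Aᵀ *ᵥ a} =
      WithLp.toLp 2 ⁻¹' affineSpan ℝ ((fun j ↦ WithLp.toLp 2 (A j)) '' {i}ᶜ) := by
  ext x
  simp [toLp_mem_affineSpan_image_row_iff]

theorem toLp_row_notMem_affineSpan [DecidableEq m] [Fintype n] {A : Matrix m n ℝ}
    (hA : IsUnit (A * Aᵀ).det) (i : m) :
    WithLp.toLp 2 (A i) ∉ affineSpan ℝ ((fun j ↦ WithLp.toLp 2 (A j)) '' {i}ᶜ) := by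
  have hrow : LinearIndependent ℝ fun j ↦ WithLp.toLp 2 (A j) :=
    (linearIndependent_row_of_isUnit_mul ((isUnit_iff_isUnit_det _).2 hA)).map'
      (WithLp.linearEquiv 2 ℝ (n → ℝ)).symm.toLinearMap (LinearEquiv.ker _)
  rw [hrow.affineIndependent.mem_affineSpan_iff]
  simp

theorem enorm2_eq_norm_toLp {k : ℕ} (w : Fin k → ℝ) : enorm2 w = ‖WithLp.toLp 2 w‖ := by
  simp [enorm2, EuclideanSpace.norm_eq]

theorem dotProduct_eq_inner_toLp [Fintype n] (x y : n → ℝ) :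
    x ⬝ᵥ y = ⟪WithLp.toLp 2 x, WithLp.toLp 2 y⟫ := by
  simp [EuclideanSpace.inner_toLp_toLp, dotProduct_comm]

end Matrix

theorem stmt2_general {E ι : Type*} [NormedAddCommGroup E] [InnerProductSpace ℝ E]
    (v : ι → E) (i : ι) (hv : v i ∉ affineSpan ℝ (v '' {i}ᶜ))
    {p q : E} (hp : p ∈ affineSpan ℝ (v '' {i}ᶜ))
    (hpmin : IsMinOn norm (affineSpan ℝ (v '' {i}ᶜ) : Set E) p)
    (hq : q ∈ affineSpan ℝ (v '' {i}ᶜ))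
    (hqmin : IsMinOn (fun y ↦ ‖v i - y‖) (affineSpan ℝ (v '' {i}ᶜ) : Set E) q)
    {t : Finset ι} (hi : i ∈ t) {a : ι → ℝ} (ha : ∑ j ∈ t, a j = 1)
    (hmin : IsMinOn norm (affineSpan ℝ (Set.range v) : Set E) (∑ j ∈ t, a j • v j)) :
    a i = (‖p‖ ^ 2 - ⟪v i, p⟫) / ‖v i - q‖ ^ 2 ∧ (0 < a i ↔ ⟪v i, p⟫ < ‖p‖ ^ 2) := by
  have hqT : q ∈ affineSpan ℝ (Set.range v) := affineSpan_mono ℝ (Set.image_subset_range v _) hq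
  have horth : ⟪∑ j ∈ t, a j • v j, v i - q⟫ = 0 :=
    inner_sub_eq_zero_of_isMinOn_norm (sum_smul_mem_affineSpan_range v ha) hmin
      (mem_affineSpan ℝ (Set.mem_range_self i)) hqT
  have hmul : a i * ‖v i - q‖ ^ 2 = ‖p‖ ^ 2 - ⟪v i, p⟫ :=
    mul_norm_sub_sq_of_inner_add_smul_sub_eq_zero hp hpmin hq hqmin
      (sum_smul_sub_smul_sub_mem_affineSpan hi ha hq) (by rwa [sub_add_cancel])
  have hne : v i ≠ q := fun h ↦ hv (by rwa [h])
  have hpos : 0 < ‖v i - q‖ ^ 2 := pow_pos (norm_sub_pos_iff.2 hne) 2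
  have hcoeff := eq_div_of_mul_eq hpos.ne' hmul
  exact ⟨hcoeff, by rw [hcoeff, div_pos_iff_of_pos_right hpos, sub_pos]⟩

/-- Coefficient-sign characterization: if `Π_T(0) = ∑ j, a*_j A_j` with `∑ j a*_j = 1`,
`p0 = Π_{T∖i}(0)` is the minimum-norm point of `T∖i` and `pA = Π_{T∖i}(A_i)` is the
projection of row `A_i` onto `T∖i`, then
`a*_i = (‖p0‖² − A_iᵀ p0) / ‖A_i − pA‖²`; in particular `a*_i > 0 ↔ A_iᵀ p0 < ‖p0‖²`. -/
theorem stmt2 (n d : ℕ) (A : Matrix (Fin n) (Fin d) ℝ) (hK : IsUnit (A * Aᵀ).det)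
    (i : Fin n)
    (T : Set (Fin d → ℝ)) (hT : T = {v | ∃ a : Fin n → ℝ, (∑ j, a j) = 1 ∧ v = Aᵀ *ᵥ a})
    (Tdel : Set (Fin d → ℝ))
    (hTdel : Tdel = {v | ∃ a : Fin n → ℝ, a i = 0 ∧ (∑ j, a j) = 1 ∧ v = Aᵀ *ᵥ a})
    (p0 : Fin d → ℝ) (hp0T : p0 ∈ Tdel) (hp0min : ∀ v ∈ Tdel, enorm2 p0 ≤ enorm2 v)
    (pA : Fin d → ℝ) (hpAT : pA ∈ Tdel)
    (hpAmin : ∀ v ∈ Tdel, enorm2 (A i - pA) ≤ enorm2 (A i - v))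
    (astar : Fin n → ℝ) (hsum : ∑ j, astar j = 1)
    (hmin : ∀ v ∈ T, enorm2 (Aᵀ *ᵥ astar) ≤ enorm2 v) :
    astar i = ((enorm2 p0) ^ 2 - A i ⬝ᵥ p0) / (enorm2 (A i - pA)) ^ 2 ∧
      (0 < astar i ↔ A i ⬝ᵥ p0 < (enorm2 p0) ^ 2) := by
  subst hT hTdel
  simp only [setOf_transpose_mulVec_eq_preimage, setOf_transpose_mulVec_eq_preimage_compl,
    Set.mem_preimage, SetLike.mem_coe, enorm2_eq_norm_toLp, dotProduct_eq_inner_toLp,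
    WithLp.toLp_sub, toLp_transpose_mulVec] at hp0T hp0min hpAT hpAmin hmin ⊢
  exact stmt2_general _ i (toLp_row_notMem_affineSpan hK i)
    hp0T (fun y ↦ hp0min y.ofLp) hpAT (fun y ↦ hpAmin y.ofLp)
    (Finset.mem_univ i) hsum (fun y ↦ hmin y.ofLp)

end
end

section
/- There is a universal constant c > 0 such that the following holds. Let n, d be positive integers, λ ∈ ℝ^d with positive entries, and let (X, y) be a λ-anisotropic subgaussian sample of size n in dimension d with Gram matrix K = X Xᵀ. Then for any δ ∈ (0, 1/2), with probability at least 1 − δ, the operator norm satisfies ‖K − ‖λ‖₁ I_n‖ ≤ c ‖λ‖₁ ( √((n + log(1/δ))/d₂) + (n + log(1/δ))/d_∞ ). -/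
open MeasureTheory ProbabilityTheory Matrix
open scoped Matrix.Norms.L2Operator

noncomputable section

/-- `(X, y)` (with underlying matrix `Z` of independent, mean-zero, unit-variance,
1-subgaussian entries) is a `lam`-anisotropic subgaussian sample: `X = Z diag(lam)^{1/2}`. -/
structure IsAnisoSample {Ω : Type*} [MeasurableSpace Ω] (μ : Measure Ω)
    {n d : ℕ} (lam : Fin d → ℝ)
    (Z X : Ω → Matrix (Fin n) (Fin d) ℝ) (y : Fin n → ℝ) : Prop where
  lam_pos : ∀ j, 0 < lam j
  labels : ∀ i, y i = 1 ∨ y i = -1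
  meas : ∀ i j, Measurable fun ω => Z ω i j
  indep : iIndepFun (fun (p : Fin n × Fin d) ω => Z ω p.1 p.2) μ
  mean_zero : ∀ i j, ∫ ω, Z ω i j ∂μ = 0
  var_one : ∀ i j, ∫ ω, (Z ω i j) ^ 2 ∂μ = 1
  subg_int : ∀ i j (t : ℝ), Integrable (fun ω => Real.exp (t * Z ω i j)) μ
  subg : ∀ i j (t : ℝ), ∫ ω, Real.exp (t * Z ω i j) ∂μ ≤ Real.exp (t ^ 2 / 2)
  X_eq : ∀ ω i j, X ω i j = Real.sqrt (lam j) * Z ω i j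

/-- ℓ₂ dimension proxy `d₂ = ‖λ‖₁²/‖λ‖₂²`. -/
def dim2 {d : ℕ} (lam : Fin d → ℝ) : ℝ := (∑ j, lam j) ^ 2 / ∑ j, (lam j) ^ 2

/-- ℓ∞ dimension proxy `d∞ = ‖λ‖₁/‖λ‖∞`. -/
def dimInf {d : ℕ} (lam : Fin d → ℝ) : ℝ := (∑ j, lam j) / ⨆ j, lam j

/-!
For a fixed unit vector `u`, the quadratic form of `K - ‖λ‖₁ I` at `u` is `∑ j, λ j (W j ^ 2 - 1)`,
where the `W j = ∑ i, u i * Z i j` are independent, subgaussian and of variance one. Averaging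
`exp (t W)` over a Gaussian `t` bounds `E exp (a W ^ 2)`, so each `W j ^ 2 - 1` is sub-exponential
and the weighted sum satisfies a Bernstein inequality, in which `∑ j, λ j ^ 2` is the variance proxy
and `max λ` the scale. At deviation level `n + log (1 / δ)` the failure probability beats the
`5 ^ n` points of a `1 / 2`-net of the sphere. Such a net controls the operator norm of a symmetric
matrix because `⟪x, T x⟫ - ⟪u, T u⟫ = ⟪x - u, T (x + u)⟫` and `‖x - u‖ ‖x + u‖` is bounded away
from `1`.
-/

section SphereNet

open Metric Module
open scoped NNReal

variable {E : Type*} [NormedAddCommGroup E] [NormedSpace ℝ E] [FiniteDimensional ℝ E]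

lemma packingNumber_half_closedBall_le :
    packingNumber (1 / 2) (closedBall (0 : E) 1) ≤ 5 ^ finrank ℝ E := by
  classical
  refine iSup_le fun C => iSup₂_le fun hC hsep => ?_
  by_contra! hlt
  obtain ⟨t, htC, htcard⟩ := Set.exists_subset_encard_eq (Order.add_one_le_of_lt hlt)
  have htfin : t.Finite := Set.finite_of_encard_eq_coe (k := 5 ^ finrank ℝ E + 1) (mod_cast htcard)
  lift t to Finset E using htfin
  have two_smul_inj : Function.Injective fun x : E => (2 : ℝ) • x :=
    smul_right_injective E two_ne_zero
  have hcard : (t.image fun x => (2 : ℝ) • x).card ≤ 5 ^ finrank ℝ E := by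
    refine Besicovitch.card_le_of_separated _ ?_ ?_
    · simp only [Finset.forall_mem_image, norm_smul, Real.norm_ofNat]
      intro x hx
      linarith [mem_closedBall_zero_iff.1 (hC (htC hx))]
    · simp only [Finset.forall_mem_image, two_smul_inj.ne_iff]
      intro x hx y hy hxy
      have hdist : (1 / 2 : ℝ≥0) < nndist x y :=
        ENNReal.coe_lt_coe.1 (by simpa only [edist_nndist] using hsep (htC hx) (htC hy) hxy)
      rw [← smul_sub, norm_smul, Real.norm_ofNat, ← dist_eq_norm]
      have : (1 / 2 : ℝ) < dist x y := mod_cast hdist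
      linarith
  rw [Finset.card_image_of_injective _ two_smul_inj] at hcard
  rw [Set.encard_coe_eq_coe_finsetCard] at htcard
  have : t.card = 5 ^ finrank ℝ E + 1 := mod_cast htcard
  omega

lemma exists_finset_isCover_half_sphere :
    ∃ N : Finset E, ↑N ⊆ sphere (0 : E) 1 ∧ IsCover (1 / 2) (sphere (0 : E) 1) ↑N ∧
      N.card ≤ 5 ^ finrank ℝ E := by
  have hle : coveringNumber (1 / 2) (sphere (0 : E) 1) ≤ (5 ^ finrank ℝ E : ℕ) :=
    calc coveringNumber (1 / 2) (sphere (0 : E) 1)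
        ≤ packingNumber (1 / 2) (sphere (0 : E) 1) := coveringNumber_le_packingNumber _ _
      _ ≤ packingNumber (1 / 2) (closedBall (0 : E) 1) :=
          iSup_le fun C => iSup₂_le fun hC hsep =>
            hsep.encard_le_packingNumber (hC.trans sphere_subset_closedBall)
      _ ≤ (5 ^ finrank ℝ E : ℕ) := mod_cast packingNumber_half_closedBall_le
  have hne : coveringNumber (1 / 2) (sphere (0 : E) 1) ≠ ⊤ := ne_top_of_le_ne_top (by simp) hle
  obtain ⟨N, hN⟩ := finite_minimalCover (ε := 1 / 2) (A := sphere (0 : E) 1) |>.exists_finset_coe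
  refine ⟨N, hN ▸ minimalCover_subset, hN ▸ isCover_minimalCover hne, ?_⟩
  rw [← encard_minimalCover hne, ← hN, Set.encard_coe_eq_coe_finsetCard] at hle
  exact mod_cast hle

end SphereNet

section QuadraticForm

open Metric
open scoped RealInnerProductSpace

variable {E : Type*} [NormedAddCommGroup E] [InnerProductSpace ℝ E] {T : E →L[ℝ] E}

-- The triangle inequality alone only gives the useless bound `1`.
lemma norm_sub_mul_norm_add_le {x u : E} (hx : ‖x‖ = 1) (hu : ‖u‖ = 1) (hxu : ‖x - u‖ ≤ 1 / 2) :
    ‖x - u‖ * ‖x + u‖ ≤ 31 / 32 := by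
  have hpar : ‖x + u‖ ^ 2 = 4 - ‖x - u‖ ^ 2 := by
    linarith [hx ▸ hu ▸ parallelogram_law_with_norm ℝ x u, sq ‖x + u‖, sq ‖x - u‖]
  have hsq : ‖x - u‖ ^ 2 ≤ 1 / 4 := by
    calc ‖x - u‖ ^ 2 ≤ (1 / 2) ^ 2 := by gcongr
      _ = 1 / 4 := by norm_num
  refine le_of_sq_le_sq ?_ (by norm_num)
  rw [mul_pow, hpar]
  nlinarith

lemma abs_inner_map_self_le_add (hT : (T : E →ₗ[ℝ] E).IsSymmetric) (x u : E) :
    |⟪x, T x⟫| ≤ |⟪u, T u⟫| + ‖x - u‖ * ‖x + u‖ * ‖T‖ := by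
  have hsymm : ⟪u, T x⟫ = ⟪x, T u⟫ := by rw [real_inner_comm]; exact hT x u
  have hsplit : ⟪x, T x⟫ = ⟪u, T u⟫ + ⟪x - u, T (x + u)⟫ := by
    simp only [map_add, inner_add_right, inner_sub_left, hsymm]
    ring
  calc |⟪x, T x⟫| ≤ |⟪u, T u⟫| + |⟪x - u, T (x + u)⟫| := hsplit ▸ abs_add_le _ _
    _ ≤ |⟪u, T u⟫| + ‖x - u‖ * (‖T‖ * ‖x + u‖) := by
        gcongr
        exact (abs_real_inner_le_norm _ _).trans (by gcongr; exact T.le_opNorm _)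
    _ = |⟪u, T u⟫| + ‖x - u‖ * ‖x + u‖ * ‖T‖ := by ring

lemma opNorm_le_of_forall_unit_abs_inner_le (hT : (T : E →ₗ[ℝ] E).IsSymmetric) {r : ℝ}
    (hr : 0 ≤ r) (h : ∀ x, ‖x‖ = 1 → |⟪x, T x⟫| ≤ r) : ‖T‖ ≤ r := by
  rw [T.norm_eq_iSup_rayleighQuotient hT]
  refine ciSup_le fun x => ?_
  rcases eq_or_ne x 0 with rfl | hx
  · simpa using hr
  · have hunit : ‖‖x‖⁻¹ • x‖ = 1 := norm_smul_inv_norm hx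
    rw [← T.rayleigh_smul x (inv_ne_zero (norm_ne_zero_iff.2 hx))]
    simpa [ContinuousLinearMap.rayleighQuotient, ContinuousLinearMap.reApplyInnerSelf_apply,
      hunit, real_inner_comm] using h _ hunit

lemma opNorm_le_of_isCover_half_sphere (hT : (T : E →ₗ[ℝ] E).IsSymmetric) {N : Set E}
    (hN : N ⊆ sphere 0 1) (hcover : IsCover (1 / 2) (sphere 0 1) N) {r : ℝ} (hr : 0 ≤ r)
    (h : ∀ u ∈ N, |⟪u, T u⟫| ≤ r) : ‖T‖ ≤ 32 * r := by
  have habsorb : ‖T‖ ≤ r + 31 / 32 * ‖T‖ := by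
    refine opNorm_le_of_forall_unit_abs_inner_le hT (by positivity) fun x hx => ?_
    obtain ⟨u, huN, hxu⟩ := Set.mem_iUnion₂.1 <|
      isCover_iff_subset_iUnion_closedBall.1 hcover (mem_sphere_zero_iff_norm.2 hx)
    have hu : ‖u‖ = 1 := mem_sphere_zero_iff_norm.1 (hN huN)
    have hxu' : ‖x - u‖ ≤ 1 / 2 := by simpa [dist_eq_norm] using hxu
    grw [abs_inner_map_self_le_add hT x u, h u huN, norm_sub_mul_norm_add_le hx hu hxu']
  linarith

lemma l2_opNorm_le_of_isCover_half_sphere {ι : Type*} [Fintype ι] [DecidableEq ι]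
    {A : Matrix ι ι ℝ} (hA : A.IsSymm) {N : Set (EuclideanSpace ℝ ι)} (hN : N ⊆ sphere 0 1)
    (hcover : IsCover (1 / 2) (sphere 0 1) N) {r : ℝ} (hr : 0 ≤ r)
    (h : ∀ u ∈ N, |u ⬝ᵥ A *ᵥ u| ≤ r) : ‖A‖ ≤ 32 * r := by
  rw [← l2_opNorm_toEuclideanCLM]
  refine opNorm_le_of_isCover_half_sphere (fun x y => ?_) hN hcover hr
    fun u hu => by simpa only [inner_toEuclideanCLM] using h u hu
  change ⟪toEuclideanCLM (𝕜 := ℝ) A x, y⟫ = ⟪x, toEuclideanCLM (𝕜 := ℝ) A y⟫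
  rw [real_inner_comm, inner_toEuclideanCLM, inner_toEuclideanCLM, dotProduct_mulVec,
    ← mulVec_transpose, hA.eq, dotProduct_comm]

end QuadraticForm

/-- `X` is sub-exponential with variance proxy `v` and scale `b`: its moment generating function is
dominated by that of a centred Gaussian of variance `v`, but only on the interval `|t| * b ≤ 1`
(all of `ℝ` when `b = 0`). It is the analogue of `HasSubgaussianMGF` for squares of subgaussian
variables. -/
structure HasSubexponentialMGF {Ω : Type*} {_ : MeasurableSpace Ω} (X : Ω → ℝ) (v b : ℝ)
    (μ : Measure Ω) : Prop where
  integrable_exp_mul : ∀ t : ℝ, |t| * b ≤ 1 → Integrable (fun ω => Real.exp (t * X ω)) μ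
  mgf_le : ∀ t : ℝ, |t| * b ≤ 1 → mgf X μ t ≤ Real.exp (v * t ^ 2 / 2)

namespace HasSubexponentialMGF

open Real

variable {Ω : Type*} {_ : MeasurableSpace Ω} {μ : Measure Ω} {X : Ω → ℝ} {v b b' : ℝ}

lemma mono_scale (h : HasSubexponentialMGF X v b μ) (hb : b ≤ b') :
    HasSubexponentialMGF X v b' μ where
  integrable_exp_mul t ht := h.integrable_exp_mul t (le_trans (by gcongr) ht)
  mgf_le t ht := h.mgf_le t (le_trans (by gcongr) ht)

lemma const_mul (h : HasSubexponentialMGF X v b μ) (r : ℝ) :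
    HasSubexponentialMGF (fun ω => r * X ω) (r ^ 2 * v) (|r| * b) μ where
  integrable_exp_mul t ht := by
    simpa only [mul_assoc] using
      h.integrable_exp_mul (t * r) (by rwa [abs_mul, mul_assoc])
  mgf_le t ht := by
    rw [mgf_const_mul]
    calc mgf X μ (r * t) ≤ exp (v * (r * t) ^ 2 / 2) :=
          h.mgf_le (r * t) (by rwa [mul_comm r, abs_mul, mul_assoc])
      _ = exp (r ^ 2 * v * t ^ 2 / 2) := by ring_nf

lemma neg (h : HasSubexponentialMGF X v b μ) :
    HasSubexponentialMGF (fun ω => -X ω) v b μ := by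
  simpa using h.const_mul (-1)

lemma sum_of_iIndepFun {κ : Type*} {X : κ → Ω → ℝ} {v : κ → ℝ} (hindep : iIndepFun X μ)
    (hX : ∀ j, Measurable (X j)) {s : Finset κ}
    (h : ∀ j ∈ s, HasSubexponentialMGF (X j) (v j) b μ) :
    HasSubexponentialMGF (fun ω => ∑ j ∈ s, X j ω) (∑ j ∈ s, v j) b μ := by
  have := hindep.isProbabilityMeasure
  rw [← Finset.sum_fn]
  refine ⟨fun t ht => hindep.integrable_exp_mul_sum hX fun j hj =>
    (h j hj).integrable_exp_mul t ht, fun t ht => ?_⟩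
  calc mgf (∑ j ∈ s, X j) μ t = ∏ j ∈ s, mgf (X j) μ t := hindep.mgf_sum hX s
    _ ≤ ∏ j ∈ s, exp (v j * t ^ 2 / 2) :=
        Finset.prod_le_prod (fun _ _ => mgf_nonneg) fun j hj => (h j hj).mgf_le t ht
    _ = exp ((∑ j ∈ s, v j) * t ^ 2 / 2) := by
        rw [← exp_sum, Finset.sum_mul, Finset.sum_div]

lemma measure_ge_le [IsFiniteMeasure μ] (h : HasSubexponentialMGF X v b μ) (hb : 0 < b)
    {L : ℝ} (hL : 0 < L) :
    μ.real {ω | √(2 * v * L) + 2 * b * L ≤ X ω} ≤ exp (-L) := by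
  set a := √(2 * v * L) + 2 * b * L
  have ha0 : 0 < a := by positivity
  -- The unconstrained optimum `a / v` of the Chernoff exponent may exceed `1 / b`; this one is
  -- admissible in both the Gaussian and the exponential regime.
  set t := 2 * L / a with ht
  have ht0 : 0 ≤ t := by positivity
  have htb : |t| * b ≤ 1 := by
    rw [abs_of_nonneg ht0, ht, div_mul_eq_mul_div, div_le_one ha0]
    linarith [sqrt_nonneg (2 * v * L)]
  have hta : t * a = 2 * L := div_mul_cancel₀ _ ha0.ne'
  have hvt : v * t ^ 2 / 2 ≤ L := by
    have hsq : 2 * v * L ≤ a ^ 2 := by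
      rw [← sqrt_le_left ha0.le]
      linarith [show 0 ≤ 2 * b * L by positivity]
    calc v * t ^ 2 / 2 = (2 * v * L) * L / a ^ 2 := by rw [ht, div_pow]; ring
      _ ≤ a ^ 2 * L / a ^ 2 := by gcongr
      _ = L := by field_simp
  calc μ.real {ω | a ≤ X ω} ≤ exp (-t * a) * mgf X μ t :=
        measure_ge_le_exp_mul_mgf a ht0 (h.integrable_exp_mul t htb)
    _ ≤ exp (-(2 * L)) * exp L := by
        rw [neg_mul, hta]
        gcongr
        exact (h.mgf_le t htb).trans (exp_le_exp.2 hvt)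
    _ = exp (-L) := by rw [← exp_add]; ring_nf

lemma measure_abs_ge_le [IsFiniteMeasure μ] (h : HasSubexponentialMGF X v b μ) (hb : 0 < b)
    {L : ℝ} (hL : 0 < L) :
    μ.real {ω | √(2 * v * L) + 2 * b * L ≤ |X ω|} ≤ 2 * exp (-L) := by
  simp only [le_abs, Set.ofPred_or]
  linarith [measureReal_union_le (μ := μ) {ω | √(2 * v * L) + 2 * b * L ≤ X ω}
    {ω | √(2 * v * L) + 2 * b * L ≤ -X ω}, h.measure_ge_le hb hL, h.neg.measure_ge_le hb hL]

end HasSubexponentialMGF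

section SubexponentialCriterion

open Real

variable {Ω : Type*} {_ : MeasurableSpace Ω} {μ : Measure Ω} [IsProbabilityMeasure μ] {Y : Ω → ℝ}

lemma exp_le_one_add_add_sq_mul_exp_abs (x : ℝ) : exp x ≤ 1 + x + x ^ 2 * exp |x| := by
  have hTaylor := Complex.norm_exp_sub_sum_le_norm_mul_exp (x : ℂ) 2
  have hremainder : Complex.exp x - ∑ m ∈ Finset.range 2, (x : ℂ) ^ m / m.factorial =
      ((exp x - (1 + x) : ℝ) : ℂ) := by
    simp [Finset.sum_range_succ]
  rw [hremainder, Complex.norm_real, Complex.norm_real, norm_eq_abs, norm_eq_abs, sq_abs]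
    at hTaylor
  linarith [le_abs_self (exp x - (1 + x))]

lemma exp_mul_le_one_add_add_exp_abs {t : ℝ} (ht : |t| ≤ 1 / 2) (y : ℝ) :
    exp (t * y) ≤ 1 + t * y + 8 * t ^ 2 * exp |y| := by
  have hty : |t * y| ≤ |y| / 2 := by
    rw [abs_mul]
    linarith [mul_le_mul_of_nonneg_right ht (abs_nonneg y)]
  have hsq : y ^ 2 ≤ 8 * exp (|y| / 2) := by
    have := quadratic_le_exp_of_nonneg (x := |y| / 2) (by positivity)
    nlinarith [sq_abs y, abs_nonneg y]
  calc exp (t * y) ≤ 1 + t * y + (t * y) ^ 2 * exp |t * y| :=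
        exp_le_one_add_add_sq_mul_exp_abs _
    _ ≤ 1 + t * y + t ^ 2 * (8 * exp (|y| / 2)) * exp (|y| / 2) := by
        rw [mul_pow]
        gcongr
    _ = 1 + t * y + 8 * t ^ 2 * exp |y| := by
        rw [show exp |y| = exp (|y| / 2) * exp (|y| / 2) by rw [← exp_add, add_halves]]
        ring

lemma hasSubexponentialMGF_of_integral_exp_abs_le_two (hY : Integrable Y μ)
    (hmean : ∫ ω, Y ω ∂μ = 0) (hint : Integrable (fun ω => exp |Y ω|) μ)
    (hle : ∫ ω, exp |Y ω| ∂μ ≤ 2) : HasSubexponentialMGF Y 32 2 μ := by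
  have hmajorant (t : ℝ) : Integrable (fun ω => 1 + t * Y ω + 8 * t ^ 2 * exp |Y ω|) μ :=
    ((integrable_const 1).add (hY.const_mul t)).add (hint.const_mul _)
  have hptwise {t : ℝ} (ht : |t| * 2 ≤ 1) (ω : Ω) :
      exp (t * Y ω) ≤ 1 + t * Y ω + 8 * t ^ 2 * exp |Y ω| :=
    exp_mul_le_one_add_add_exp_abs (by linarith) _
  have hexp {t : ℝ} (ht : |t| * 2 ≤ 1) : Integrable (fun ω => exp (t * Y ω)) μ :=
    (hmajorant t).mono' (continuous_exp.comp_aestronglyMeasurable (hY.1.const_mul t))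
      (.of_forall fun ω => by simpa only [norm_eq_abs, abs_exp] using hptwise ht ω)
  refine ⟨fun t ht => hexp ht, fun t ht => ?_⟩
  calc mgf Y μ t ≤ ∫ ω, (1 + t * Y ω + 8 * t ^ 2 * exp |Y ω|) ∂μ :=
        integral_mono (hexp ht) (hmajorant t) (hptwise ht)
    _ = 1 + 8 * t ^ 2 * ∫ ω, exp |Y ω| ∂μ := by
        rw [integral_add (by fun_prop) (by fun_prop), integral_add (by fun_prop) (by fun_prop),
          integral_const_mul, integral_const_mul, hmean]
        simp
    _ ≤ 32 * t ^ 2 / 2 + 1 := by nlinarith [sq_nonneg t]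
    _ ≤ exp (32 * t ^ 2 / 2) := add_one_le_exp _

end SubexponentialCriterion

section SquareOfSubgaussian

open Real
open scoped NNReal

lemma lintegral_exp_mul_gaussianReal (v : ℝ≥0) (w : ℝ) :
    ∫⁻ t, ENNReal.ofReal (exp (t * w)) ∂gaussianReal 0 v =
      ENNReal.ofReal (exp (v * w ^ 2 / 2)) := by
  have hmgf := congrFun (mgf_id_gaussianReal (μ := 0) (v := v)) w
  simp only [mul_comm _ w]
  rw [← ofReal_integral_eq_lintegral_ofReal (integrable_exp_mul_gaussianReal w)
    (.of_forall fun t => exp_nonneg _)]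
  simpa [mgf] using congrArg ENNReal.ofReal hmgf

lemma lintegral_exp_mul_sq_gaussianReal {v : ℝ≥0} {a : ℝ} (h : 2 * a * v < 1) :
    ∫⁻ t, ENNReal.ofReal (exp (a * t ^ 2)) ∂gaussianReal 0 v =
      ENNReal.ofReal (√(1 - 2 * a * v))⁻¹ := by
  rcases eq_or_ne v 0 with rfl | hv
  · simp
  set b := (1 - 2 * a * v) / (2 * v) with hb
  have hb0 : 0 < b := div_pos (by linarith) (by positivity)
  have hdensity (t : ℝ) : (gaussianPDF 0 v * fun t => ENNReal.ofReal (exp (a * t ^ 2))) t =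
      ENNReal.ofReal ((√(2 * π * v))⁻¹ * exp (-b * t ^ 2)) := by
    rw [Pi.mul_apply, gaussianPDF, ← ENNReal.ofReal_mul (gaussianPDFReal_nonneg _ _ _),
      gaussianPDFReal, mul_assoc, ← exp_add, hb]
    congr 3
    field_simp
    ring
  rw [gaussianReal_of_var_ne_zero _ hv, lintegral_withDensity_eq_lintegral_mul _
    (measurable_gaussianPDF _ _) (by fun_prop), lintegral_congr hdensity,
    ← ofReal_integral_eq_lintegral_ofReal ((integrable_exp_neg_mul_sq hb0).const_mul _)
      (.of_forall fun t => by positivity), integral_const_mul, integral_gaussian,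
    ← sqrt_inv, ← sqrt_inv, ← sqrt_mul (by positivity), hb]
  congr 2
  have : 1 - 2 * a * v ≠ 0 := by linarith
  field_simp

variable {Ω : Type*} {_ : MeasurableSpace Ω} {μ : Measure Ω} {W : Ω → ℝ} {c : ℝ≥0}

lemma lintegral_exp_mul_sq_le_of_hasSubgaussianMGF [SFinite μ] (hW : HasSubgaussianMGF W c μ)
    {a : ℝ≥0} (ha : 2 * a * c < 1) :
    ∫⁻ ω, ENNReal.ofReal (exp (a * W ω ^ 2)) ∂μ ≤ ENNReal.ofReal (√(1 - 2 * a * c))⁻¹ := by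
  have hmeas := hW.aemeasurable
  have hc : 2 * ((c : ℝ) / 2) * (2 * a : ℝ≥0) = 2 * a * c := by push_cast; ring
  calc ∫⁻ ω, ENNReal.ofReal (exp (a * W ω ^ 2)) ∂μ
      = ∫⁻ ω, ∫⁻ t, ENNReal.ofReal (exp (t * W ω)) ∂gaussianReal 0 (2 * a) ∂μ := by
        simp_rw [lintegral_exp_mul_gaussianReal]
        push_cast
        ring_nf
    _ = ∫⁻ t, ∫⁻ ω, ENNReal.ofReal (exp (t * W ω)) ∂μ ∂gaussianReal 0 (2 * a) :=
        lintegral_lintegral_swap (by fun_prop)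
    _ ≤ ∫⁻ t, ENNReal.ofReal (exp (c / 2 * t ^ 2)) ∂gaussianReal 0 (2 * a) := by
        refine lintegral_mono fun t => ?_
        rw [← ofReal_integral_eq_lintegral_ofReal (hW.integrable_exp_mul t)
          (.of_forall fun ω => exp_nonneg _), div_mul_eq_mul_div]
        exact ENNReal.ofReal_le_ofReal (hW.mgf_le t)
    _ = ENNReal.ofReal (√(1 - 2 * a * c))⁻¹ := by
        rw [lintegral_exp_mul_sq_gaussianReal (hc ▸ mod_cast ha), hc]

lemma integrable_exp_mul_sq_of_hasSubgaussianMGF [SFinite μ] (hW : HasSubgaussianMGF W c μ)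
    {a : ℝ≥0} (ha : 2 * a * c < 1) : Integrable (fun ω => exp (a * W ω ^ 2)) μ := by
  have hmeas := hW.aemeasurable
  refine ⟨AEMeasurable.aestronglyMeasurable (by fun_prop), ?_⟩
  rw [hasFiniteIntegral_iff_ofReal (.of_forall fun ω => exp_nonneg _)]
  exact (lintegral_exp_mul_sq_le_of_hasSubgaussianMGF hW ha).trans_lt ENNReal.ofReal_lt_top

lemma integral_exp_mul_sq_le_of_hasSubgaussianMGF [SFinite μ] (hW : HasSubgaussianMGF W c μ)
    {a : ℝ≥0} (ha : 2 * a * c < 1) :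
    ∫ ω, exp (a * W ω ^ 2) ∂μ ≤ (√(1 - 2 * a * c))⁻¹ := by
  rw [← ENNReal.ofReal_le_ofReal_iff (by positivity), ofReal_integral_eq_lintegral_ofReal
    (integrable_exp_mul_sq_of_hasSubgaussianMGF hW ha) (.of_forall fun ω => exp_nonneg _)]
  exact lintegral_exp_mul_sq_le_of_hasSubgaussianMGF hW ha

lemma hasSubexponentialMGF_sub_integral_of_nonneg [IsProbabilityMeasure μ] {Y : Ω → ℝ}
    (hY : 0 ≤ Y) (hint : Integrable Y μ) (hexp : Integrable (fun ω => exp (Y ω)) μ)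
    (hle : ∫ ω, exp (Y ω) ∂μ ≤ √2) :
    HasSubexponentialMGF (fun ω => Y ω - ∫ ω', Y ω' ∂μ) 32 2 μ := by
  set m := ∫ ω, Y ω ∂μ
  have hm : 0 ≤ m := integral_nonneg hY
  have hjensen : exp m ≤ ∫ ω, exp (Y ω) ∂μ :=
    convexOn_exp.map_integral_le continuousOn_exp isClosed_univ (by simp) hint hexp
  have hmajorant (ω : Ω) : exp |Y ω - m| ≤ exp (Y ω) * exp m := by
    rw [← exp_add, exp_le_exp, abs_le]
    constructor <;> linarith [show 0 ≤ Y ω from hY ω]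
  have hexpabs : Integrable (fun ω => exp |Y ω - m|) μ :=
    (hexp.mul_const _).mono' (continuous_exp.comp_aestronglyMeasurable (by fun_prop))
      (.of_forall fun ω => by simpa only [norm_eq_abs, abs_exp] using hmajorant ω)
  refine hasSubexponentialMGF_of_integral_exp_abs_le_two (hint.sub (integrable_const m)) ?_
    hexpabs ?_
  · rw [integral_sub hint (integrable_const m)]
    simp [m]
  · calc ∫ ω, exp |Y ω - m| ∂μ ≤ (∫ ω, exp (Y ω) ∂μ) * exp m := by
          rw [← integral_mul_const]
          exact integral_mono hexpabs (hexp.mul_const _) hmajorant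
      _ ≤ √2 * √2 := by gcongr; exact hjensen.trans hle
      _ = 2 := mul_self_sqrt zero_le_two

lemma hasSubexponentialMGF_sq_sub_integral [IsProbabilityMeasure μ] (hW : HasSubgaussianMGF W c μ)
    (hc : 0 < c) :
    HasSubexponentialMGF (fun ω => W ω ^ 2 - ∫ ω', W ω' ^ 2 ∂μ) (512 * c ^ 2) (8 * c) μ := by
  obtain ⟨a, ha⟩ : ∃ a : ℝ≥0, (a : ℝ) = (4 * (c : ℝ))⁻¹ := ⟨(4 * c)⁻¹, by simp⟩
  have hac : 2 * a * c = (1 / 2 : ℝ) := by rw [ha]; field_simp; norm_num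
  have hac1 : 2 * a * c < 1 := by
    rw [← NNReal.coe_lt_coe]
    push_cast
    linarith
  have hexp : ∫ ω, exp (a * W ω ^ 2) ∂μ ≤ √2 := by
    calc ∫ ω, exp (a * W ω ^ 2) ∂μ ≤ (√(1 - 2 * a * c))⁻¹ :=
          integral_exp_mul_sq_le_of_hasSubgaussianMGF hW hac1
      _ = √2 := by rw [hac, ← sqrt_inv]; norm_num
  have hscaled := (hasSubexponentialMGF_sub_integral_of_nonneg (Y := fun ω => a * W ω ^ 2)
    (fun ω => by positivity) ((hW.memLp 2).integrable_sq.const_mul _)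
    (integrable_exp_mul_sq_of_hasSubgaussianMGF hW hac1) hexp).const_mul (4 * c)
  have hunscale (x : ℝ) : 4 * c * (a * x) = x := by rw [ha]; field_simp
  simp only [integral_const_mul, ← mul_sub, hunscale] at hscaled
  convert hscaled using 1
  · ring
  · rw [abs_of_pos (by positivity)]
    ring

lemma integral_eq_zero_of_hasSubgaussianMGF [IsProbabilityMeasure μ]
    (hW : HasSubgaussianMGF W c μ) : ∫ ω, W ω ∂μ = 0 := by
  have hmgf : HasDerivAt (mgf W μ) (∫ ω, W ω ∂μ) 0 := by
    have hint : (0 : ℝ) ∈ interior (integrableExpSet W μ) := by simp [hW.integrableExpSet_eq_univ]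
    rw [← deriv_mgf_zero hint]
    exact (differentiableAt_mgf hint).hasDerivAt
  have hgauss : HasDerivAt (fun t => exp (c * t ^ 2 / 2)) 0 0 := by
    simpa using ((((hasDerivAt_id (0 : ℝ)).pow 2).const_mul (c : ℝ)).div_const 2).exp
  have hmin : IsLocalMin (fun t => exp (c * t ^ 2 / 2) - mgf W μ t) 0 :=
    .of_forall fun t => by simpa using hW.mgf_le t
  simpa using hmin.hasDerivAt_eq_zero (hgauss.sub hmgf)

end SquareOfSubgaussian

section IndependentFamilies

open scoped NNReal

variable {Ω : Type*} {_ : MeasurableSpace Ω} {μ : Measure Ω} {ι κ : Type*}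

lemma iIndepFun_curry {𝓧 : Type*} {_ : MeasurableSpace 𝓧} {X : ι → κ → Ω → 𝓧}
    (hX : ∀ i j, Measurable (X i j)) (h : iIndepFun (fun p : ι × κ => X p.1 p.2) μ) :
    iIndepFun (fun i ω j => X i j ω) μ := by
  have := h.isProbabilityMeasure
  have hprob (i : ι) (j : κ) : IsProbabilityMeasure (μ.map (X i j)) :=
    Measure.isProbabilityMeasure_map (hX i j).aemeasurable
  have hrow (i : ι) : μ.map (fun ω j => X i j ω) = Measure.infinitePi fun j => μ.map (X i j) :=
    (iIndepFun_iff_map_fun_eq_infinitePi_map (hX i)).1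
      (h.precomp (g := Prod.mk i) (Prod.mk_right_injective i))
  rw [iIndepFun_iff_map_fun_eq_infinitePi_map (by fun_prop)] at h ⊢
  simp only [hrow]
  rw [← Measure.infinitePi_map_curry fun i j => μ.map (X i j), ← h,
    Measure.map_map (MeasurableEquiv.measurable _) (by fun_prop)]
  rfl

variable [Fintype ι] {X : ι → Ω → ℝ} {c : ℝ≥0}

lemma hasSubgaussianMGF_sum_mul (hindep : iIndepFun X μ) (hX : ∀ i, HasSubgaussianMGF (X i) c μ)
    (u : EuclideanSpace ℝ ι) :
    HasSubgaussianMGF (fun ω => ∑ i, u i * X i ω) (‖u‖₊ ^ 2 * c) μ := by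
  have hscaled : iIndepFun (fun i ω => u i * X i ω) μ :=
    hindep.comp (fun i x => u i * x) fun i => measurable_const_mul (u i)
  have hterm (i : ι) : HasSubgaussianMGF (fun ω => u i * X i ω) (‖u i‖₊ ^ 2 * c) μ := by
    convert (hX i).const_mul (u i)
    exact congrArg (· * c) (NNReal.eq (sq_abs (u i)))
  have hnorm : ‖u‖₊ ^ 2 * c = ∑ i, ‖u i‖₊ ^ 2 * c := by
    rw [← Finset.sum_mul]
    congr 1
    ext
    simpa using EuclideanSpace.real_norm_sq_eq u
  exact hnorm ▸ HasSubgaussianMGF.sum_of_iIndepFun hscaled fun i _ => hterm i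

lemma integral_sum_mul_sq (hindep : iIndepFun X μ) (hX : ∀ i, MemLp (X i) 2 μ)
    (hmean : ∀ i, ∫ ω, X i ω ∂μ = 0) {v : ℝ} (hvar : ∀ i, ∫ ω, X i ω ^ 2 ∂μ = v)
    (u : EuclideanSpace ℝ ι) : ∫ ω, (∑ i, u i * X i ω) ^ 2 ∂μ = ‖u‖ ^ 2 * v := by
  have := hindep.isProbabilityMeasure
  have hscaled : iIndepFun (fun i ω => u i * X i ω) μ :=
    hindep.comp (fun i x => u i * x) fun i => measurable_const_mul (u i)
  have hmem (i : ι) : MemLp (fun ω => u i * X i ω) 2 μ := (hX i).const_mul (u i)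
  have hsum_mean : ∫ ω, ∑ i, u i * X i ω ∂μ = 0 := by
    rw [integral_finsetSum _ fun i _ => (hmem i).integrable one_le_two]
    simp [integral_const_mul, hmean]
  have hsum_var := IndepFun.variance_sum (s := Finset.univ) (fun i _ => hmem i)
    fun i _ j _ hij => hscaled.indepFun hij
  have hterm (i : ι) : variance (fun ω => u i * X i ω) μ = u i ^ 2 * v := by
    rw [variance_const_mul, variance_of_integral_eq_zero (hX i).aemeasurable (hmean i), hvar]
  rwa [Finset.sum_fn, variance_of_integral_eq_zero
    (memLp_finsetSum _ fun i _ => hmem i).aemeasurable hsum_mean,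
    Finset.sum_congr rfl fun i _ => hterm i, ← Finset.sum_mul,
    ← EuclideanSpace.real_norm_sq_eq] at hsum_var

lemma hasSubexponentialMGF_sum_mul_sq_sub [Fintype κ] {W : κ → Ω → ℝ} (hindep : iIndepFun W μ)
    (hmeas : ∀ j, Measurable (W j)) (hc : 0 < c) (hW : ∀ j, HasSubgaussianMGF (W j) c μ) {v : ℝ}
    (hvar : ∀ j, ∫ ω, W j ω ^ 2 ∂μ = v) (lam : κ → ℝ) :
    HasSubexponentialMGF (fun ω => ∑ j, lam j * (W j ω ^ 2 - v))
      (512 * c ^ 2 * ∑ j, lam j ^ 2) (8 * c * ‖lam‖) μ := by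
  have := hindep.isProbabilityMeasure
  have hindep' : iIndepFun (fun j ω => lam j * (W j ω ^ 2 - v)) μ :=
    hindep.comp (fun j x => lam j * (x ^ 2 - v)) fun j => by fun_prop
  have hterm (j : κ) : HasSubexponentialMGF (fun ω => lam j * (W j ω ^ 2 - v))
      (512 * c ^ 2 * lam j ^ 2) (8 * c * ‖lam‖) μ := by
    have h := (hasSubexponentialMGF_sq_sub_integral (hW j) hc).const_mul (lam j)
    rw [hvar j, mul_comm (lam j ^ 2), mul_comm |lam j|] at h
    exact h.mono_scale (by gcongr; exact norm_le_pi_norm lam j)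
  rw [Finset.mul_sum]
  exact HasSubexponentialMGF.sum_of_iIndepFun hindep' (fun j => by fun_prop) fun j _ => hterm j

end IndependentFamilies

section CenteredGram

variable {ι κ : Type*} [DecidableEq ι] [Fintype κ] [DecidableEq κ]

/-- `Z diag(lam) Zᵀ` minus its expectation `v ‖lam‖₁ I`, for `Z` with independent centred entries of
second moment `v`. For positive `lam` and `v = 1` this is the centred Gram matrix of the sample
`X = Z diag(lam)^{1/2}`; without the square root, weights of either sign are allowed. -/
def centeredGram (lam : κ → ℝ) (v : ℝ) (Z : Matrix ι κ ℝ) : Matrix ι ι ℝ :=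
  Z * diagonal lam * Zᵀ - (v * ∑ j, lam j) • 1

lemma isSymm_centeredGram (lam : κ → ℝ) (v : ℝ) (Z : Matrix ι κ ℝ) :
    (centeredGram lam v Z).IsSymm := by
  simp [centeredGram, IsSymm, Matrix.mul_assoc]

lemma dotProduct_centeredGram_mulVec [Fintype ι] (lam : κ → ℝ) (v : ℝ) (Z : Matrix ι κ ℝ)
    (u : EuclideanSpace ℝ ι) :
    u ⬝ᵥ centeredGram lam v Z *ᵥ u = ∑ j, lam j * ((∑ i, u i * Z i j) ^ 2 - ‖u‖ ^ 2 * v) := by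
  have hgram : u ⬝ᵥ (Z * diagonal lam * Zᵀ) *ᵥ u = ∑ j, lam j * (∑ i, u i * Z i j) ^ 2 := by
    rw [Matrix.mul_assoc, ← mulVec_mulVec, ← mulVec_mulVec, dotProduct_mulVec, mulVec_transpose]
    refine Finset.sum_congr rfl fun j _ => ?_
    rw [mulVec_diagonal, vecMul, dotProduct]
    ring
  have hnorm : (u : ι → ℝ) ⬝ᵥ u = ‖u‖ ^ 2 := by
    rw [EuclideanSpace.real_norm_sq_eq]
    exact Finset.sum_congr rfl fun i _ => (sq _).symm
  rw [centeredGram, sub_mulVec, dotProduct_sub, smul_mulVec, one_mulVec, dotProduct_smul, hgram,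
    hnorm]
  simp only [mul_sub, Finset.sum_sub_distrib, ← Finset.sum_mul, smul_eq_mul]
  ring

end CenteredGram

section UnionBound

open Real

lemma ofReal_one_sub_le_measure_of_compl_subset_biUnion {Ω α : Type*} {_ : MeasurableSpace Ω}
    {μ : Measure Ω} [IsProbabilityMeasure μ] {s : Finset α} {B : α → Set Ω} {G : Set Ω} {p δ : ℝ}
    (hG : Gᶜ ⊆ ⋃ u ∈ s, B u) (hB : ∀ u ∈ s, μ.real (B u) ≤ p) (hp : s.card * p ≤ δ) :
    ENNReal.ofReal (1 - δ) ≤ μ G := by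
  have hcompl : μ.real Gᶜ ≤ δ :=
    calc μ.real Gᶜ ≤ μ.real (⋃ u ∈ s, B u) := measureReal_mono hG (measure_ne_top _ _)
      _ ≤ ∑ u ∈ s, μ.real (B u) := measureReal_biUnion_finset_le s B
      _ ≤ s.card * p := by simpa only [nsmul_eq_mul] using Finset.sum_le_card_nsmul s _ p hB
      _ ≤ δ := hp
  have htotal : 1 ≤ μ.real G + μ.real Gᶜ := by
    simpa only [Set.union_compl_self, probReal_univ] using measureReal_union_le (μ := μ) G Gᶜ
  exact ENNReal.ofReal_le_of_le_toReal (show 1 - δ ≤ μ.real G by linarith)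

lemma five_pow_mul_two_mul_exp_le {n : ℕ} (hn : n ≠ 0) {δ : ℝ} (hδ : 0 < δ) (hδ1 : δ ≤ 1) :
    5 ^ n * (2 * exp (-(4 * (n + log (1 / δ))))) ≤ δ := by
  have hbase : 10 * exp (-4) ≤ 1 := by
    rw [exp_neg, ← div_eq_mul_inv, div_le_one (exp_pos 4)]
    calc (10 : ℝ) ≤ (1 + 1) ^ 4 := by norm_num
      _ ≤ exp 1 ^ 4 := by gcongr; exact add_one_le_exp 1
      _ = exp 4 := by rw [← exp_nat_mul]; norm_num
  have hexp : exp (-(4 * (n + log (1 / δ)))) = exp (-4) ^ n * δ ^ 4 := by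
    rw [← exp_nat_mul, one_div, log_inv, ← exp_log (pow_pos hδ 4), ← exp_add, log_pow]
    push_cast
    ring_nf
  calc 5 ^ n * (2 * exp (-(4 * (n + log (1 / δ)))))
      = 5 ^ n * 2 * exp (-4) ^ n * δ ^ 4 := by rw [hexp]; ring
    _ ≤ 5 ^ n * 2 ^ n * exp (-4) ^ n * δ := by
        gcongr
        · exact le_self_pow₀ one_le_two hn
        · exact pow_le_of_le_one hδ.le hδ1 four_ne_zero
    _ = (10 * exp (-4)) ^ n * δ := by rw [← mul_pow, ← mul_pow]; norm_num
    _ ≤ δ := mul_le_of_le_one_left hδ.le (pow_le_one₀ (by positivity) hbase)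

end UnionBound

section Concentration

open Real
open scoped NNReal

variable {Ω : Type*} {_ : MeasurableSpace Ω} {μ : Measure Ω} {ι κ : Type*} [Fintype ι]
  [DecidableEq ι] [Fintype κ] [DecidableEq κ] {Z : Ω → Matrix ι κ ℝ} {c : ℝ≥0} {v : ℝ}
  {lam : κ → ℝ}

lemma hasSubexponentialMGF_dotProduct_centeredGram_mulVec
    (hmeas : ∀ i j, Measurable fun ω => Z ω i j)
    (hindep : iIndepFun (fun (p : ι × κ) ω => Z ω p.1 p.2) μ) (hc : 0 < c)
    (hsubg : ∀ i j, HasSubgaussianMGF (fun ω => Z ω i j) c μ)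
    (hvar : ∀ i j, ∫ ω, Z ω i j ^ 2 ∂μ = v) (lam : κ → ℝ) {u : EuclideanSpace ℝ ι}
    (hu : ‖u‖ = 1) :
    HasSubexponentialMGF (fun ω => u ⬝ᵥ centeredGram lam v (Z ω) *ᵥ u)
      (512 * c ^ 2 * ∑ j, lam j ^ 2) (8 * c * ‖lam‖) μ := by
  have := hindep.isProbabilityMeasure
  have hcol (j : κ) : iIndepFun (fun i ω => Z ω i j) μ :=
    hindep.precomp (g := fun i => (i, j)) (Prod.mk_left_injective j)
  have hcols : iIndepFun (fun j ω i => Z ω i j) μ :=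
    iIndepFun_curry (fun j i => hmeas i j)
      (hindep.precomp (g := Prod.swap) Prod.swap_injective)
  simp only [dotProduct_centeredGram_mulVec, hu, one_pow, one_mul]
  refine hasSubexponentialMGF_sum_mul_sq_sub
    (hcols.comp (fun _ x => ∑ i, u i * x i) fun _ => by fun_prop) (fun j => by fun_prop) hc
    (fun j => ?_) (fun j => ?_) lam
  · simpa [Function.comp_def, show ‖u‖₊ = 1 from NNReal.eq hu]
      using hasSubgaussianMGF_sum_mul (hcol j) (hsubg · j) u
  · simpa [hu] using integral_sum_mul_sq (hcol j) (fun i => (hsubg i j).memLp 2)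
      (fun i => integral_eq_zero_of_hasSubgaussianMGF (hsubg i j)) (hvar · j) u

lemma measureReal_le_abs_dotProduct_centeredGram_mulVec_le
    (hmeas : ∀ i j, Measurable fun ω => Z ω i j)
    (hindep : iIndepFun (fun (p : ι × κ) ω => Z ω p.1 p.2) μ) (hc : 0 < c)
    (hsubg : ∀ i j, HasSubgaussianMGF (fun ω => Z ω i j) c μ)
    (hvar : ∀ i j, ∫ ω, Z ω i j ^ 2 ∂μ = v) (hlam : lam ≠ 0) {u : EuclideanSpace ℝ ι}
    (hu : ‖u‖ = 1) {L : ℝ} (hL : 0 < L) :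
    μ.real {ω | 64 * c * (√(L * ∑ j, lam j ^ 2) + L * ‖lam‖) ≤
      |u ⬝ᵥ centeredGram lam v (Z ω) *ᵥ u|} ≤ 2 * exp (-(4 * L)) := by
  have := hindep.isProbabilityMeasure
  have hscale : 0 < 8 * c * ‖lam‖ :=
    mul_pos (mul_pos (by norm_num) hc) (norm_pos_iff.2 hlam)
  have hthreshold : √(2 * (512 * c ^ 2 * ∑ j, lam j ^ 2) * (4 * L)) +
      2 * (8 * c * ‖lam‖) * (4 * L) = 64 * c * (√(L * ∑ j, lam j ^ 2) + L * ‖lam‖) := by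
    rw [show 2 * (512 * c ^ 2 * ∑ j, lam j ^ 2) * (4 * L) =
      (64 * c) ^ 2 * (L * ∑ j, lam j ^ 2) by ring, sqrt_mul (by positivity),
      sqrt_sq (by positivity)]
    ring
  rw [← hthreshold]
  exact (hasSubexponentialMGF_dotProduct_centeredGram_mulVec hmeas hindep hc hsubg hvar lam
    hu).measure_abs_ge_le hscale (by positivity)

theorem stmt4_general [Nonempty ι] (hmeas : ∀ i j, Measurable fun ω => Z ω i j)
    (hindep : iIndepFun (fun (p : ι × κ) ω => Z ω p.1 p.2) μ) (hc : 0 < c)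
    (hsubg : ∀ i j, HasSubgaussianMGF (fun ω => Z ω i j) c μ)
    (hvar : ∀ i j, ∫ ω, Z ω i j ^ 2 ∂μ = v) (hlam : lam ≠ 0) {δ : ℝ} (hδ : 0 < δ) (hδ1 : δ ≤ 1) :
    ENNReal.ofReal (1 - δ) ≤
      μ {ω | ‖centeredGram lam v (Z ω)‖ ≤
        2048 * c * (√((Fintype.card ι + log (1 / δ)) * ∑ j, lam j ^ 2) +
          (Fintype.card ι + log (1 / δ)) * ‖lam‖)} := by
  have := hindep.isProbabilityMeasure
  set L := Fintype.card ι + log (1 / δ)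
  have hL0 : 0 < L := add_pos_of_pos_of_nonneg (mod_cast Fintype.card_pos)
    (log_nonneg (one_le_one_div hδ hδ1))
  obtain ⟨N, hNsphere, hNcover, hNcard⟩ := exists_finset_isCover_half_sphere
    (E := EuclideanSpace ℝ ι)
  rw [finrank_euclideanSpace] at hNcard
  refine ofReal_one_sub_le_measure_of_compl_subset_biUnion (s := N) (p := 2 * exp (-(4 * L)))
    (fun ω hω => ?_) (fun u hu => measureReal_le_abs_dotProduct_centeredGram_mulVec_le hmeas
      hindep hc hsubg hvar hlam (mem_sphere_zero_iff_norm.1 (hNsphere hu)) hL0) ?_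
  · by_contra hgood
    simp only [Set.mem_iUnion, Set.mem_ofPred_eq, not_exists, not_le] at hgood
    refine hω ?_
    have := l2_opNorm_le_of_isCover_half_sphere (isSymm_centeredGram lam v (Z ω)) hNsphere hNcover
      (by positivity) fun u hu => (hgood u hu).le
    exact this.trans_eq (by ring)
  · calc (N.card : ℝ) * (2 * exp (-(4 * L)))
        ≤ 5 ^ Fintype.card ι * (2 * exp (-(4 * L))) := by gcongr; exact mod_cast hNcard
      _ ≤ δ := five_pow_mul_two_mul_exp_le Fintype.card_ne_zero hδ hδ1

end Concentration

section DimensionProxies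

open Real

variable {d : ℕ} {lam : Fin d → ℝ}

lemma norm_eq_iSup_of_nonneg {ι : Type*} [Fintype ι] {f : ι → ℝ} (hf : 0 ≤ f) :
    ‖f‖ = ⨆ i, f i := by
  refine le_antisymm ?_ (Real.iSup_le (fun i => (le_abs_self _).trans (norm_le_pi_norm f i))
    (norm_nonneg f))
  refine (pi_norm_le_iff_of_nonneg (Real.iSup_nonneg hf)).2 fun i => ?_
  rw [norm_of_nonneg (hf i)]
  exact le_ciSup (Set.finite_range f).bddAbove i

lemma sum_mul_sqrt_div_dim2_add_div_dimInf (hlam : 0 < lam) (L : ℝ) :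
    (∑ j, lam j) * (√(L / dim2 lam) + L / dimInf lam) = √(L * ∑ j, lam j ^ 2) + L * ‖lam‖ := by
  have hsum : 0 < ∑ j, lam j := Fintype.sum_pos hlam
  rw [dim2, dimInf, ← norm_eq_iSup_of_nonneg hlam.le, div_div_eq_mul_div, div_div_eq_mul_div,
    sqrt_div' _ (sq_nonneg _), sqrt_sq hsum.le]
  field_simp

end DimensionProxies

namespace IsAnisoSample

variable {Ω : Type*} [MeasurableSpace Ω] {μ : Measure Ω} {n d : ℕ} {lam : Fin d → ℝ}
  {Z X : Ω → Matrix (Fin n) (Fin d) ℝ} {y : Fin n → ℝ}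

lemma weights_pos [Nonempty (Fin d)] (h : IsAnisoSample μ lam Z X y) : 0 < lam :=
  Pi.lt_def.2 ⟨fun j => (h.lam_pos j).le, Classical.arbitrary _, h.lam_pos _⟩

lemma hasSubgaussianMGF (h : IsAnisoSample μ lam Z X y) (i : Fin n) (j : Fin d) :
    HasSubgaussianMGF (fun ω => Z ω i j) 1 μ :=
  ⟨h.subg_int i j, fun t => by simpa [mgf] using h.subg i j t⟩

lemma gram_sub_eq_centeredGram (h : IsAnisoSample μ lam Z X y) (ω : Ω) :
    X ω * (X ω)ᵀ - (∑ j, lam j) • 1 = centeredGram lam 1 (Z ω) := by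
  rw [centeredGram, one_mul]
  congr 1
  ext i k
  rw [Matrix.mul_apply, Matrix.mul_apply]
  simp only [mul_diagonal, transpose_apply, h.X_eq]
  refine Finset.sum_congr rfl fun j _ => ?_
  rw [mul_mul_mul_comm, Real.mul_self_sqrt (h.lam_pos j).le]
  ring

end IsAnisoSample

/-- Concentration of the Gram matrix of an anisotropic subgaussian sample around `‖λ‖₁ I`,
in ℓ₂ operator norm. -/
theorem stmt4 :
    ∃ c > (0 : ℝ),
      ∀ (Ω : Type*) (_ : MeasurableSpace Ω) (μ : Measure Ω), IsProbabilityMeasure μ →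
      ∀ (n d : ℕ), 0 < n → 0 < d →
      ∀ (lam : Fin d → ℝ) (Z X : Ω → Matrix (Fin n) (Fin d) ℝ) (y : Fin n → ℝ),
        IsAnisoSample μ lam Z X y →
      ∀ δ : ℝ, 0 < δ → δ < 1 / 2 →
        ENNReal.ofReal (1 - δ) ≤
          μ {ω | ‖X ω * (X ω)ᵀ - (∑ j, lam j) • (1 : Matrix (Fin n) (Fin n) ℝ)‖ ≤
              c * (∑ j, lam j) *
                (Real.sqrt ((n + Real.log (1 / δ)) / dim2 lam) +
                  (n + Real.log (1 / δ)) / dimInf lam)} := by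
  refine ⟨2048, by norm_num, fun Ω _ μ _ n d hn hd lam Z X y h δ hδ hδ' => ?_⟩
  have : Nonempty (Fin n) := ⟨⟨0, hn⟩⟩
  have : Nonempty (Fin d) := ⟨⟨0, hd⟩⟩
  have hlam : 0 < lam := h.weights_pos
  simpa [h.gram_sub_eq_centeredGram, mul_assoc, sum_mul_sqrt_div_dim2_add_div_dimInf hlam] using
    stmt4_general h.meas h.indep one_pos h.hasSubgaussianMGF h.var_one hlam.ne' hδ (by linarith)

end
end
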